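/- Let α_1,…,α_l be independent Gamma random variables with shape N and scale parameters P_1,…,P_l > 0, and let Z > 0. Then Pr{Σ_{k=1}^l α_k < Z} = ((Z/P_1)···(Z/P_l))^N / Γ(lN+1) · Φ₂^l(N,…,N; lN+1; −Z/P_1,…,−Z/P_l), where Φ₂^l is the confluent Lauricella hypergeometric function of l variables: Φ₂^l(b_1,…,b_l; c; x_1,…,x_l) = Σ_{i_1,…,i_l ≥ 0} [(b_1)_{i_1}···(b_l)_{i_l} / (c)_{i_1+···+i_l}] · ∏_k x_k^{i_k}/i_k!. -/

import Mathlib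

open MeasureTheory ProbabilityTheory Real
open scoped ENNReal

/-!
The density of `(α_1, …, α_l)` is `∏ P_k^{-a_k} x_k^{a_k-1} / Γ(a_k)` times `exp (-∑ x_k / P_k)`.
Expand the exponential as a multiple power series and integrate it termwise over the simplex
`{x ≥ 0, ∑ x_k < Z}`, where it is dominated. Each term is then a multiple of Dirichlet's integral
`∫ ∏ x_k^{a_k-1} / Γ(a_k) = Z^{∑ a_k} / Γ(∑ a_k + 1)` with shapes `a_k + i_k`.

Dirichlet's integral is a multiple of `Z^{∑ a_k}` by homogeneity. Its value at `Z = 1` follows from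
`1 = ∫ e^{-∑ x_k} ∏ x_k^{a_k-1} / Γ(a_k) = ∫_0^∞ e^{-t} V t^{∑ a_k} dt = V Γ(∑ a_k + 1)`, in which
`V` is that value and `e^{-s} = ∫_s^∞ e^{-t} dt` is used for the middle equality.
-/

theorem lintegral_exp_neg_Ioi (s : ℝ) :
    ∫⁻ t in Set.Ioi s, ENNReal.ofReal (exp (-t)) = ENNReal.ofReal (exp (-s)) := by
  rw [← integral_exp_neg_Ioi, ofReal_integral_eq_lintegral_ofReal (integrableOn_exp_neg_Ioi s)
    (.of_forall fun t => (exp_pos _).le)]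

theorem lintegral_exp_neg_mul_rpow_Ioi {s : ℝ} (hs : 0 < s) :
    ∫⁻ t in Set.Ioi 0, ENNReal.ofReal (exp (-t) * t ^ (s - 1)) = ENNReal.ofReal (Gamma s) := by
  rw [Gamma_eq_integral hs, ofReal_integral_eq_lintegral_ofReal (GammaIntegral_convergent hs)]
  filter_upwards [ae_restrict_mem measurableSet_Ioi] with t (ht : 0 < t)
  positivity

theorem lintegral_exp_neg_mul_eq_lintegral_setLIntegral_lt {α : Type*} [MeasurableSpace α]
    {μ : Measure α} [SFinite μ] {f : α → ℝ} (hf : Measurable f) {g : α → ℝ≥0∞}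
    (hg : Measurable g) :
    ∫⁻ x, ENNReal.ofReal (exp (-f x)) * g x ∂μ =
      ∫⁻ t, ENNReal.ofReal (exp (-t)) * ∫⁻ x in {x | f x < t}, g x ∂μ := by
  have hs : MeasurableSet {p : α × ℝ | f p.1 < p.2} := measurableSet_lt (by fun_prop) (by fun_prop)
  have hinner (x : α) : ENNReal.ofReal (exp (-f x)) * g x =
      ∫⁻ t, {p : α × ℝ | f p.1 < p.2}.indicator
        (fun p => ENNReal.ofReal (exp (-p.2)) * g p.1) (x, t) := by
    rw [← lintegral_exp_neg_Ioi, ← lintegral_mul_const _ (by fun_prop),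
      ← lintegral_indicator measurableSet_Ioi]
    rfl
  have houter (t : ℝ) : ENNReal.ofReal (exp (-t)) * ∫⁻ x in {x | f x < t}, g x ∂μ =
      ∫⁻ x, {p : α × ℝ | f p.1 < p.2}.indicator
        (fun p => ENNReal.ofReal (exp (-p.2)) * g p.1) (x, t) ∂μ := by
    rw [← lintegral_const_mul _ hg, ← lintegral_indicator (measurableSet_lt hf measurable_const)]
    rfl
  simp only [hinner, houter]
  exact lintegral_lintegral_swap (((by fun_prop : Measurable fun p : α × ℝ =>
    ENNReal.ofReal (exp (-p.2)) * g p.1).indicator hs).aemeasurable)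

theorem lintegral_eq_mul_lintegral_comp_smul {E : Type*} [NormedAddCommGroup E] [NormedSpace ℝ E]
    [MeasurableSpace E] [BorelSpace E] [FiniteDimensional ℝ E] (μ : Measure E)
    [μ.IsAddHaarMeasure] {c : ℝ} (hc : 0 < c) (f : E → ℝ≥0∞) :
    ∫⁻ x, f x ∂μ = ENNReal.ofReal (c ^ Module.finrank ℝ E) * ∫⁻ x, f (c • x) ∂μ := by
  have hmap : ∫⁻ x, f (c • x) ∂μ = ∫⁻ x, f x ∂μ.map (c • ·) :=
    ((MeasurableEquiv.smul₀ c hc.ne').measurableEmbedding.lintegral_map f).symm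
  rw [hmap, Measure.map_addHaar_smul μ hc.ne', lintegral_smul_measure, smul_eq_mul, ← mul_assoc,
    ← ENNReal.ofReal_mul (by positivity), abs_of_pos (by positivity),
    mul_inv_cancel₀ (by positivity), ENNReal.ofReal_one, one_mul]

theorem measurable_gammaPDF (a r : ℝ) : Measurable (gammaPDF a r) :=
  (measurable_gammaPDFReal a r).ennreal_ofReal

/-- The kernel `x_+^{a-1} / Γ(a)` of Riemann–Liouville integration of order `a`, i.e. the density of
the Gamma distribution of shape `a` without its exponential factor. As in `gammaPDFReal`, the point
`x = 0` is counted in the support. -/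
noncomputable def riemannLiouvilleKernel (a x : ℝ) : ℝ :=
  if 0 ≤ x then x ^ (a - 1) / Gamma a else 0

section RiemannLiouvilleKernel

variable {a : ℝ}

theorem measurable_riemannLiouvilleKernel (a : ℝ) : Measurable (riemannLiouvilleKernel a) :=
  Measurable.ite measurableSet_Ici (by fun_prop) measurable_const

theorem riemannLiouvilleKernel_of_neg (a : ℝ) {x : ℝ} (hx : x < 0) :
    riemannLiouvilleKernel a x = 0 :=
  if_neg hx.not_ge

theorem riemannLiouvilleKernel_nonneg (ha : 0 < a) (x : ℝ) : 0 ≤ riemannLiouvilleKernel a x := by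
  rw [riemannLiouvilleKernel]
  split_ifs <;> positivity

theorem riemannLiouvilleKernel_mul {c : ℝ} (hc : 0 < c) (a x : ℝ) :
    riemannLiouvilleKernel a (c * x) = c ^ (a - 1) * riemannLiouvilleKernel a x := by
  simp only [riemannLiouvilleKernel, mul_nonneg_iff_of_pos_left hc]
  split_ifs with hx
  · rw [mul_rpow hc.le hx, mul_div_assoc]
  · rw [mul_zero]

theorem pow_mul_riemannLiouvilleKernel (ha : 0 < a) (j : ℕ) (x : ℝ) :
    x ^ j * riemannLiouvilleKernel a x =
      Gamma (a + j) / Gamma a * riemannLiouvilleKernel (a + j) x := by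
  rcases Nat.eq_zero_or_pos j with rfl | hj
  · simp [(Gamma_pos_of_pos ha).ne']
  rw [riemannLiouvilleKernel, riemannLiouvilleKernel]
  split_ifs with hx
  · have hne : a - 1 + j ≠ 0 := by
      have : (1 : ℝ) ≤ j := by exact_mod_cast hj
      linarith
    have hpos : Gamma (a + j) ≠ 0 := (Gamma_pos_of_pos (by positivity)).ne'
    rw [add_sub_right_comm, rpow_add_natCast' hx hne]
    field_simp
  · simp

theorem gammaPDFReal_eq_mul_riemannLiouvilleKernel (a r x : ℝ) :
    gammaPDFReal a r x = r ^ a * exp (-(r * x)) * riemannLiouvilleKernel a x := by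
  rw [gammaPDFReal, riemannLiouvilleKernel]
  split_ifs <;> ring

end RiemannLiouvilleKernel

variable {ι : Type*} [Fintype ι]

theorem measurePi_count {κ : Type*} [Countable κ] [MeasurableSpace κ]
    [MeasurableSingletonClass κ] :
    Measure.pi (fun _ : ι => (Measure.count : Measure κ)) = Measure.count :=
  Measure.ext_of_singleton fun i => by simp [Measure.pi_singleton]

theorem hasSum_pi_prod {κ 𝕜 : Type*} [Countable κ] [RCLike 𝕜] {f : ι → κ → 𝕜} {s : ι → 𝕜}
    (hf : ∀ k, HasSum (f k) (s k)) :
    HasSum (fun i : ι → κ => ∏ k, f k (i k)) (∏ k, s k) := by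
  let : MeasurableSpace κ := ⊤
  have hint (k : ι) : Integrable (f k) Measure.count :=
    integrable_count_iff.2 (hf k).summable.norm
  have hval (k : ι) : ∫ j, f k j ∂Measure.count = s k := by
    simp [integral_countable (hint k), measureReal_def, (hf k).tsum_eq]
  have hprod : Integrable (fun i : ι → κ => ∏ k, f k (i k)) Measure.count :=
    measurePi_count (ι := ι) (κ := κ) ▸ Integrable.fintype_prod_dep hint
  have hsum : Summable fun i : ι → κ => ∏ k, f k (i k) :=
    (integrable_count_iff.1 hprod).of_norm
  refine hsum.hasSum_iff.2 ?_
  calc ∑' i : ι → κ, ∏ k, f k (i k) = ∫ i : ι → κ, ∏ k, f k (i k) ∂Measure.count := by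
        simp [integral_countable hprod, measureReal_def]
    _ = ∏ k, s k := by
        simp only [← measurePi_count, integral_fintype_prod_eq_prod, hval]

theorem hasSum_pi_pow_div_factorial (x : ι → ℝ) :
    HasSum (fun i : ι → ℕ => ∏ k, x k ^ i k / ((i k).factorial : ℝ)) (exp (∑ k, x k)) := by
  have h := hasSum_pi_prod fun k => NormedSpace.expSeries_div_hasSum_exp (x k)
  rwa [← exp_eq_exp_ℝ, ← exp_sum] at h

theorem lmarginal_prod {E : ι → Type*} [∀ k, MeasurableSpace (E k)] [DecidableEq ι]
    {μ : ∀ k, Measure (E k)} [∀ k, SigmaFinite (μ k)] {f : ∀ k, E k → ℝ≥0∞}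
    (hf : ∀ k, Measurable (f k)) (s : Finset ι) (x : ∀ k, E k) :
    (∫⋯∫⁻_s, fun x => ∏ k, f k (x k) ∂μ) x =
      (∏ k ∈ s, ∫⁻ y, f k y ∂μ k) * ∏ k ∈ sᶜ, f k (x k) := by
  have hprod : Measurable fun x : ∀ k, E k => ∏ k, f k (x k) :=
    Finset.measurable_prod _ fun k _ => (hf k).comp (measurable_pi_apply k)
  induction s using Finset.induction_on generalizing x with
  | empty => simp
  | insert i s hi ih =>
    have hupdate (y : E i) : ∏ k ∈ sᶜ, f k (Function.update x i y k) =
        f i y * ∏ k ∈ (insert i s)ᶜ, f k (x k) := by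
      rw [← Finset.insert_compl_insert hi, Finset.prod_insert (by simp), Function.update_self]
      congr 1
      refine Finset.prod_congr rfl fun k hk => ?_
      rw [Function.update_of_ne (by rintro rfl; simp at hk)]
    simp only [lmarginal_insert _ hprod hi, ih, hupdate]
    rw [lintegral_const_mul _ ((hf i).mul_const _), lintegral_mul_const _ (hf i),
      Finset.prod_insert hi]
    ring

theorem lintegral_fintype_prod_eq_prod {E : ι → Type*} [∀ k, MeasurableSpace (E k)]
    {μ : ∀ k, Measure (E k)} [∀ k, SigmaFinite (μ k)] {f : ∀ k, E k → ℝ≥0∞}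
    (hf : ∀ k, Measurable (f k)) :
    ∫⁻ x, ∏ k, f k (x k) ∂Measure.pi μ = ∏ k, ∫⁻ x, f k x ∂μ k := by
  classical
  rcases isEmpty_or_nonempty (∀ k, E k) with hE | ⟨⟨x⟩⟩
  · obtain ⟨k, hk⟩ := isEmpty_pi.1 hE
    rw [lintegral_of_isEmpty, Finset.prod_eq_zero (Finset.mem_univ k) (lintegral_of_isEmpty _ _)]
  · simpa using lmarginal_prod (μ := μ) hf Finset.univ x

theorem measurePi_withDensity {E : ι → Type*} [∀ k, MeasurableSpace (E k)]
    (μ : ∀ k, Measure (E k)) [∀ k, SigmaFinite (μ k)] {f : ∀ k, E k → ℝ≥0∞}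
    (hf : ∀ k, Measurable (f k)) [∀ k, SigmaFinite ((μ k).withDensity (f k))] :
    Measure.pi (fun k => (μ k).withDensity (f k)) =
      (Measure.pi μ).withDensity fun x => ∏ k, f k (x k) := by
  refine Measure.pi_eq fun s hs => ?_
  rw [withDensity_apply _ (.univ_pi hs), Measure.restrict_pi_pi, lintegral_fintype_prod_eq_prod hf]
  exact Finset.prod_congr rfl fun k _ => (withDensity_apply _ (hs k)).symm

theorem measurableSet_sum_lt (t : ℝ) : MeasurableSet {x : ι → ℝ | ∑ k, x k < t} :=
  measurableSet_lt (by fun_prop) measurable_const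

/-- The integrand `∏ k, x_k^{a_k-1} / Γ(a_k)` of Dirichlet's integral over a simplex, extended by
zero outside the orthant `0 ≤ x`. -/
noncomputable def dirichletIntegrand (a x : ι → ℝ) : ℝ :=
  ∏ k, riemannLiouvilleKernel (a k) (x k)

/-- The term of multi-index `i` in the expansion of `exp (∑ k, b k * x k) * dirichletIntegrand a x`
obtained from the power series of `exp`. -/
noncomputable def dirichletExpTerm (a b : ι → ℝ) (i : ι → ℕ) (x : ι → ℝ) : ℝ :=
  (∏ k, (b k * x k) ^ i k / ((i k).factorial : ℝ)) * dirichletIntegrand a x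

/-- The general term of the multiple series defining Lauricella's confluent function `Φ₂`, with the
Pochhammer symbols written as `(y)_n = Γ(y + n) / Γ(y)`; this is junk when `y` is a pole of `Γ`. -/
noncomputable def lauricellaPhi₂Term (b : ι → ℝ) (c : ℝ) (x : ι → ℝ) (i : ι → ℕ) : ℝ :=
  (∏ k, Gamma (b k + i k) / Gamma (b k)) / (Gamma (c + (∑ k, i k : ℕ)) / Gamma c) *
    ∏ k, x k ^ i k / ((i k).factorial : ℝ)

/-- Lauricella's confluent hypergeometric function `Φ₂(b; c; x)` in the variables `x k`. -/
noncomputable def lauricellaPhi₂ (b : ι → ℝ) (c : ℝ) (x : ι → ℝ) : ℝ :=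
  ∑' i : ι → ℕ, lauricellaPhi₂Term b c x i

section Dirichlet

variable {a : ι → ℝ} {Z : ℝ}

@[fun_prop]
theorem measurable_dirichletIntegrand (a : ι → ℝ) : Measurable (dirichletIntegrand a) :=
  Finset.measurable_prod _ fun k _ =>
    (measurable_riemannLiouvilleKernel (a k)).comp (measurable_pi_apply k)

theorem dirichletIntegrand_nonneg (ha : ∀ k, 0 < a k) (x : ι → ℝ) : 0 ≤ dirichletIntegrand a x :=
  Finset.prod_nonneg fun k _ => riemannLiouvilleKernel_nonneg (ha k) (x k)

theorem nonneg_of_dirichletIntegrand_ne_zero {x : ι → ℝ} (hx : dirichletIntegrand a x ≠ 0) :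
    0 ≤ x := fun k => not_lt.1 fun hk =>
  hx (Finset.prod_eq_zero (Finset.mem_univ k) (riemannLiouvilleKernel_of_neg (a k) hk))

theorem dirichletIntegrand_smul {c : ℝ} (hc : 0 < c) (a x : ι → ℝ) :
    dirichletIntegrand a (c • x) =
      c ^ (∑ k, a k) / c ^ Fintype.card ι * dirichletIntegrand a x := by
  simp only [dirichletIntegrand, Pi.smul_apply, smul_eq_mul, riemannLiouvilleKernel_mul hc,
    Finset.prod_mul_distrib, rpow_sub_one hc.ne', Finset.prod_div_distrib, rpow_sum_of_pos hc,
    Finset.prod_const, Finset.card_univ]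

theorem prod_pow_mul_dirichletIntegrand (ha : ∀ k, 0 < a k) (i : ι → ℕ) (x : ι → ℝ) :
    (∏ k, x k ^ i k) * dirichletIntegrand a x =
      (∏ k, Gamma (a k + i k) / Gamma (a k)) * dirichletIntegrand (fun k => a k + i k) x := by
  simp only [dirichletIntegrand, ← Finset.prod_mul_distrib, pow_mul_riemannLiouvilleKernel (ha _)]

theorem prod_gammaPDFReal (a r x : ι → ℝ) :
    ∏ k, gammaPDFReal (a k) (r k) (x k) =
      (∏ k, r k ^ a k) * (exp (∑ k, -r k * x k) * dirichletIntegrand a x) := by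
  simp only [gammaPDFReal_eq_mul_riemannLiouvilleKernel, dirichletIntegrand, exp_sum, neg_mul,
    Finset.prod_mul_distrib, mul_assoc]

theorem lintegral_exp_neg_sum_mul_dirichletIntegrand (ha : ∀ k, 0 < a k) :
    ∫⁻ x, ENNReal.ofReal (exp (-∑ k, x k)) * ENNReal.ofReal (dirichletIntegrand a x) = 1 := by
  have hprod (x : ι → ℝ) : ENNReal.ofReal (exp (-∑ k, x k)) *
      ENNReal.ofReal (dirichletIntegrand a x) = ∏ k, gammaPDF (a k) 1 (x k) := by
    simp only [gammaPDF]
    rw [← ENNReal.ofReal_mul (exp_pos _).le, ← ENNReal.ofReal_prod_of_nonneg fun k _ =>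
      gammaPDFReal_nonneg (ha k) one_pos (x k)]
    simpa using congrArg ENNReal.ofReal (prod_gammaPDFReal a (fun _ => 1) x).symm
  simp only [hprod, volume_pi]
  rw [lintegral_fintype_prod_eq_prod fun k => measurable_gammaPDF (a k) 1]
  exact Finset.prod_eq_one fun k _ => lintegral_gammaPDF_eq_one (ha k) one_pos

theorem setLIntegral_dirichletIntegrand_of_nonpos (a : ι → ℝ) {t : ℝ} (ht : t ≤ 0) :
    ∫⁻ x in {x | ∑ k, x k < t}, ENNReal.ofReal (dirichletIntegrand a x) = 0 := by
  refine setLIntegral_eq_zero (measurableSet_sum_lt t) fun x (hx : ∑ k, x k < t) => ?_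
  have hzero : dirichletIntegrand a x = 0 := by
    by_contra hne
    exact (hx.trans_le ht).not_ge
      (Finset.sum_nonneg fun k _ => nonneg_of_dirichletIntegrand_ne_zero hne k)
  simp [hzero]

theorem setLIntegral_dirichletIntegrand_eq_rpow_mul (a : ι → ℝ) {t : ℝ} (ht : 0 < t) :
    ∫⁻ x in {x | ∑ k, x k < t}, ENNReal.ofReal (dirichletIntegrand a x) =
      ENNReal.ofReal (t ^ ∑ k, a k) *
        ∫⁻ x in {x | ∑ k, x k < 1}, ENNReal.ofReal (dirichletIntegrand a x) := by
  have hscale (x : ι → ℝ) :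
      {x : ι → ℝ | ∑ k, x k < t}.indicator (fun x => ENNReal.ofReal (dirichletIntegrand a x))
        (t • x) =
      ENNReal.ofReal (t ^ (∑ k, a k) / t ^ Fintype.card ι) *
        {x : ι → ℝ | ∑ k, x k < 1}.indicator (fun x => ENNReal.ofReal (dirichletIntegrand a x))
          x := by
    have hmem : ∑ k, (t • x) k < t ↔ ∑ k, x k < 1 := by
      simp [← Finset.mul_sum, mul_lt_iff_lt_one_right ht]
    simp only [Set.indicator_apply, Set.mem_ofPred_eq, hmem]
    split_ifs
    · rw [dirichletIntegrand_smul ht, ENNReal.ofReal_mul (by positivity)]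
    · rw [mul_zero]
  rw [← lintegral_indicator (measurableSet_sum_lt t),
    lintegral_eq_mul_lintegral_comp_smul volume ht]
  simp only [hscale]
  rw [lintegral_const_mul _ ((by fun_prop : Measurable _).indicator (measurableSet_sum_lt 1)),
    lintegral_indicator (measurableSet_sum_lt 1), ← mul_assoc,
    ← ENNReal.ofReal_mul (by positivity), Module.finrank_fintype_fun_eq_card,
    mul_div_cancel₀ _ (by positivity)]

theorem sum_add_one_pos (ha : ∀ k, 0 < a k) : 0 < ∑ k, a k + 1 :=
  add_pos_of_nonneg_of_pos (Finset.sum_nonneg fun k _ => (ha k).le) one_pos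

theorem setLIntegral_dirichletIntegrand_mul_Gamma (ha : ∀ k, 0 < a k) :
    (∫⁻ x in {x | ∑ k, x k < 1}, ENNReal.ofReal (dirichletIntegrand a x)) *
      ENNReal.ofReal (Gamma (∑ k, a k + 1)) = 1 := by
  set V : ℝ → ℝ≥0∞ := fun t =>
    ∫⁻ x in {x | ∑ k, x k < t}, ENNReal.ofReal (dirichletIntegrand a x) with hV
  have hsupp : (Function.support fun t => ENNReal.ofReal (exp (-t)) * V t) ⊆ Set.Ioi 0 :=
    fun t ht => Set.mem_Ioi.2 <| not_le.1 fun hle =>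
      ht (by simp [hV, setLIntegral_dirichletIntegrand_of_nonpos a hle])
  calc V 1 * ENNReal.ofReal (Gamma (∑ k, a k + 1))
      = ∫⁻ t in Set.Ioi 0, ENNReal.ofReal (exp (-t) * t ^ ∑ k, a k) * V 1 := by
        rw [lintegral_mul_const _ (by fun_prop),
          ← lintegral_exp_neg_mul_rpow_Ioi (sum_add_one_pos ha), add_sub_cancel_right, mul_comm]
    _ = ∫⁻ t in Set.Ioi 0, ENNReal.ofReal (exp (-t)) * V t := by
        refine setLIntegral_congr_fun measurableSet_Ioi fun t ht => ?_
        simp only [hV]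
        rw [setLIntegral_dirichletIntegrand_eq_rpow_mul a ht, ENNReal.ofReal_mul (exp_pos _).le,
          mul_assoc]
    _ = ∫⁻ t, ENNReal.ofReal (exp (-t)) * V t := setLIntegral_eq_of_support_subset hsupp
    _ = ∫⁻ x, ENNReal.ofReal (exp (-∑ k, x k)) * ENNReal.ofReal (dirichletIntegrand a x) :=
        (lintegral_exp_neg_mul_eq_lintegral_setLIntegral_lt (by fun_prop) (by fun_prop)).symm
    _ = 1 := lintegral_exp_neg_sum_mul_dirichletIntegrand ha

theorem setLIntegral_dirichletIntegrand (ha : ∀ k, 0 < a k) (hZ : 0 < Z) :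
    ∫⁻ x in {x | ∑ k, x k < Z}, ENNReal.ofReal (dirichletIntegrand a x) =
      ENNReal.ofReal (Z ^ (∑ k, a k) / Gamma (∑ k, a k + 1)) := by
  rw [setLIntegral_dirichletIntegrand_eq_rpow_mul a hZ,
    ENNReal.eq_inv_of_mul_eq_one_left (setLIntegral_dirichletIntegrand_mul_Gamma ha),
    ENNReal.ofReal_div_of_pos (Gamma_pos_of_pos (sum_add_one_pos ha)), div_eq_mul_inv]

theorem integrableOn_dirichletIntegrand (ha : ∀ k, 0 < a k) (hZ : 0 < Z) :
    IntegrableOn (dirichletIntegrand a) {x | ∑ k, x k < Z} := by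
  refine (lintegral_ofReal_ne_top_iff_integrable (by fun_prop)
    (.of_forall (dirichletIntegrand_nonneg ha))).1 ?_
  rw [setLIntegral_dirichletIntegrand ha hZ]
  exact ENNReal.ofReal_ne_top

theorem setIntegral_dirichletIntegrand (ha : ∀ k, 0 < a k) (hZ : 0 < Z) :
    ∫ x in {x | ∑ k, x k < Z}, dirichletIntegrand a x =
      Z ^ (∑ k, a k) / Gamma (∑ k, a k + 1) := by
  have hGamma := (Gamma_pos_of_pos (sum_add_one_pos ha)).le
  rw [integral_eq_lintegral_of_nonneg_ae (.of_forall (dirichletIntegrand_nonneg ha))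
    (by fun_prop), setLIntegral_dirichletIntegrand ha hZ, ENNReal.toReal_ofReal (by positivity)]

theorem dirichletExpTerm_eq_mul_dirichletIntegrand (ha : ∀ k, 0 < a k) (b : ι → ℝ) (i : ι → ℕ)
    (x : ι → ℝ) :
    dirichletExpTerm a b i x =
      (∏ k, b k ^ i k / ((i k).factorial : ℝ)) * (∏ k, Gamma (a k + i k) / Gamma (a k)) *
        dirichletIntegrand (fun k => a k + i k) x := by
  rw [mul_assoc, ← prod_pow_mul_dirichletIntegrand ha, ← mul_assoc, ← Finset.prod_mul_distrib]
  simp only [dirichletExpTerm, mul_pow, div_mul_eq_mul_div]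

theorem integrableOn_dirichletExpTerm (ha : ∀ k, 0 < a k) (hZ : 0 < Z) (b : ι → ℝ) (i : ι → ℕ) :
    IntegrableOn (dirichletExpTerm a b i) {x | ∑ k, x k < Z} := by
  rw [funext (dirichletExpTerm_eq_mul_dirichletIntegrand ha b i)]
  exact (integrableOn_dirichletIntegrand
    (fun k => add_pos_of_pos_of_nonneg (ha k) (i k).cast_nonneg) hZ).const_mul _

theorem setIntegral_dirichletExpTerm (ha : ∀ k, 0 < a k) (hZ : 0 < Z) (b : ι → ℝ) (i : ι → ℕ) :
    ∫ x in {x | ∑ k, x k < Z}, dirichletExpTerm a b i x =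
      Z ^ (∑ k, a k) / Gamma (∑ k, a k + 1) *
        lauricellaPhi₂Term a (∑ k, a k + 1) (fun k => Z * b k) i := by
  have hGamma := (Gamma_pos_of_pos (sum_add_one_pos ha)).ne'
  simp only [dirichletExpTerm_eq_mul_dirichletIntegrand ha, integral_const_mul]
  rw [setIntegral_dirichletIntegrand
    (fun k => add_pos_of_pos_of_nonneg (ha k) (i k).cast_nonneg) hZ, lauricellaPhi₂Term,
    Finset.sum_add_distrib, rpow_add hZ, ← Nat.cast_sum, rpow_natCast, add_right_comm]
  simp only [mul_pow, mul_div_assoc, Finset.prod_mul_distrib, Finset.prod_pow_eq_pow_sum]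
  field_simp

theorem norm_dirichletExpTerm_le (ha : ∀ k, 0 < a k) (b : ι → ℝ) (i : ι → ℕ) {x : ι → ℝ}
    (hx : ∑ k, x k < Z) :
    ‖dirichletExpTerm a b i x‖ ≤
      (∏ k, (|b k| * Z) ^ i k / ((i k).factorial : ℝ)) * dirichletIntegrand a x := by
  rcases eq_or_ne (dirichletIntegrand a x) 0 with hzero | hne
  · simp [dirichletExpTerm, hzero]
  have hnonneg := nonneg_of_dirichletIntegrand_ne_zero hne
  have hle (k : ι) : x k ≤ Z :=
    (Finset.single_le_sum (fun j _ => hnonneg j) (Finset.mem_univ k)).trans hx.le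
  rw [dirichletExpTerm, norm_mul, norm_of_nonneg (dirichletIntegrand_nonneg ha x), norm_prod]
  gcongr with k
  · exact dirichletIntegrand_nonneg ha x
  rw [norm_div, norm_pow, norm_mul, norm_natCast, norm_of_nonneg (hnonneg k), norm_eq_abs]
  gcongr
  · exact mul_nonneg (abs_nonneg _) (hnonneg k)
  · exact hle k

theorem hasSum_dirichletExpTerm (a b x : ι → ℝ) :
    HasSum (fun i => dirichletExpTerm a b i x)
      (exp (∑ k, b k * x k) * dirichletIntegrand a x) :=
  (hasSum_pi_pow_div_factorial fun k => b k * x k).mul_right _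

theorem summable_setIntegral_norm_dirichletExpTerm (ha : ∀ k, 0 < a k) (hZ : 0 < Z)
    (b : ι → ℝ) :
    Summable fun i => ∫ x in {x | ∑ k, x k < Z}, ‖dirichletExpTerm a b i x‖ := by
  refine .of_nonneg_of_le (fun i => integral_nonneg fun x => norm_nonneg _) (fun i => ?_)
    ((hasSum_pi_pow_div_factorial fun k => |b k| * Z).summable.mul_right
      (∫ x in {x | ∑ k, x k < Z}, dirichletIntegrand a x))
  rw [← integral_const_mul]
  exact setIntegral_mono_on (integrableOn_dirichletExpTerm ha hZ b i).norm
    ((integrableOn_dirichletIntegrand ha hZ).const_mul _) (measurableSet_sum_lt Z)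
    fun x hx => norm_dirichletExpTerm_le ha b i hx

theorem hasSum_setIntegral_exp_mul_dirichletIntegrand (ha : ∀ k, 0 < a k) (hZ : 0 < Z)
    (b : ι → ℝ) :
    HasSum (fun i => Z ^ (∑ k, a k) / Gamma (∑ k, a k + 1) *
        lauricellaPhi₂Term a (∑ k, a k + 1) (fun k => Z * b k) i)
      (∫ x in {x | ∑ k, x k < Z}, exp (∑ k, b k * x k) * dirichletIntegrand a x) := by
  have h := hasSum_integral_of_summable_integral_norm (integrableOn_dirichletExpTerm ha hZ b)
    (summable_setIntegral_norm_dirichletExpTerm ha hZ b)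
  simpa only [(hasSum_dirichletExpTerm a b _).tsum_eq, setIntegral_dirichletExpTerm ha hZ] using h

theorem setIntegral_exp_mul_dirichletIntegrand (ha : ∀ k, 0 < a k) (hZ : 0 < Z) (b : ι → ℝ) :
    ∫ x in {x | ∑ k, x k < Z}, exp (∑ k, b k * x k) * dirichletIntegrand a x =
      Z ^ (∑ k, a k) / Gamma (∑ k, a k + 1) *
        lauricellaPhi₂ a (∑ k, a k + 1) fun k => Z * b k := by
  rw [lauricellaPhi₂, ← tsum_mul_left,
    (hasSum_setIntegral_exp_mul_dirichletIntegrand ha hZ b).tsum_eq]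

theorem measureReal_pi_gammaMeasure {r : ι → ℝ} (ha : ∀ k, 0 < a k) (hr : ∀ k, 0 < r k)
    {s : Set (ι → ℝ)} (hs : MeasurableSet s) :
    (Measure.pi fun k => gammaMeasure (a k) (r k)).real s =
      (∏ k, r k ^ a k) * ∫ x in s, exp (∑ k, -r k * x k) * dirichletIntegrand a x := by
  have (k : ι) : IsProbabilityMeasure (volume.withDensity (gammaPDF (a k) (r k))) :=
    isProbabilityMeasure_gammaMeasure (ha k) (hr k)
  have hdensity (x : ι → ℝ) : ∏ k, gammaPDF (a k) (r k) (x k) =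
      ENNReal.ofReal ((∏ k, r k ^ a k) *
        (exp (∑ k, -r k * x k) * dirichletIntegrand a x)) := by
    rw [← prod_gammaPDFReal]
    exact (ENNReal.ofReal_prod_of_nonneg fun k _ => gammaPDFReal_nonneg (ha k) (hr k) (x k)).symm
  have hnonneg (x : ι → ℝ) :
      0 ≤ (∏ k, r k ^ a k) * (exp (∑ k, -r k * x k) * dirichletIntegrand a x) :=
    mul_nonneg (Finset.prod_nonneg fun k _ => rpow_nonneg (hr k).le _)
      (mul_nonneg (exp_pos _).le (dirichletIntegrand_nonneg ha x))
  simp only [gammaMeasure]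
  rw [measurePi_withDensity _ fun k => measurable_gammaPDF (a k) (r k), ← volume_pi,
    measureReal_def, withDensity_apply _ hs, ← integral_const_mul,
    integral_eq_lintegral_of_nonneg_ae (.of_forall hnonneg) (by fun_prop)]
  simp only [hdensity]

end Dirichlet

theorem stmt5_general {a P : ι → ℝ} (ha : ∀ k, 0 < a k) (hP : ∀ k, 0 < P k) {Z : ℝ}
    (hZ : 0 < Z) :
    (Measure.pi fun k => gammaMeasure (a k) (1 / P k)).real {x | ∑ k, x k < Z} =
      (∏ k, (Z / P k) ^ a k) / Gamma (∑ k, a k + 1) *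
        lauricellaPhi₂ a (∑ k, a k + 1) fun k => -(Z / P k) := by
  have hprod : ∏ k, (Z / P k) ^ a k = (∏ k, (1 / P k) ^ a k) * Z ^ ∑ k, a k := by
    simp only [rpow_sum_of_pos hZ, ← Finset.prod_mul_distrib,
      ← mul_rpow (one_div_pos.2 (hP _)).le hZ.le, one_div_mul_eq_div]
  rw [measureReal_pi_gammaMeasure ha (fun k => one_div_pos.2 (hP k)) (measurableSet_sum_lt Z),
    setIntegral_exp_mul_dirichletIntegrand ha hZ, hprod]
  simp only [mul_neg, mul_one_div]
  ring

/-- For independent `α_k ~ Gamma(N, scale P_k)` and `Z > 0`,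
`Pr{∑_{k=1}^l α_k < Z} = ((Z/P_1)⋯(Z/P_l))^N / Γ(lN+1) · Φ₂^l(N,…,N; lN+1; -Z/P_1,…,-Z/P_l)`,
where `Φ₂^l` is the confluent Lauricella hypergeometric function of `l` variables, written
as the absolutely convergent multiple series with Pochhammer symbols `(x)_y = Γ(x+y)/Γ(x)`. -/
theorem stmt5 (N l : ℕ) (hN : 0 < N) (hl : 0 < l) (P : Fin l → ℝ) (hP : ∀ k, 0 < P k)
    (Z : ℝ) (hZ : 0 < Z) :
    (Measure.pi (fun k => gammaMeasure (N : ℝ) (1 / P k))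
        {x : Fin l → ℝ | ∑ k, x k < Z}).toReal =
      (∏ k, Z / P k) ^ N / Real.Gamma ((l * N : ℕ) + 1) *
        ∑' i : Fin l → ℕ,
          ((∏ k, Real.Gamma ((N : ℝ) + i k) / Real.Gamma N) /
              (Real.Gamma (((l * N : ℕ) + 1 : ℝ) + (∑ k, i k : ℕ)) /
                Real.Gamma ((l * N : ℕ) + 1))) *
            ∏ k, (-(Z / P k)) ^ (i k) / ((i k).factorial : ℝ) := by
  simpa [lauricellaPhi₂, lauricellaPhi₂Term, Finset.prod_pow, measureReal_def] using
    stmt5_general (a := fun _ : Fin l => (N : ℝ)) (fun _ => Nat.cast_pos.2 hN) hP hZ
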